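/- arXiv:1506.06253 — 3 statements merged into one kernel-verified Lean document; each statement's English description precedes it below -/
import Mathlib

section
/- Assume O is not the midpoint of any side of ABC (so H is not a vertex) and that O does not lie on the line AH. Let S₁ be the second point of intersection of the line AH with the circumconic C̃_O, and let T₁ be the reflection of A through O (the second intersection of line AO with C̃_O). Then the line S₁T₁ is parallel to BC. -/
noncomputable section

/-- The real affine plane. -/
abbrev Pt : Type := ℝ × ℝ

/-- `u` and `v` are parallel vectors (the zero vector is parallel to everything). -/
def Par (u v : Pt) : Prop := ∃ t : ℝ, u = t • v ∨ v = t • u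

/-- The centroid of the triangle `ABC`. -/
def cent (A B C : Pt) : Pt := (3⁻¹ : ℝ) • (A + B + C)

/-- The homothety with center `Z` and ratio `r`. -/
def homoth (Z : Pt) (r : ℝ) (X : Pt) : Pt := Z + r • (X - Z)

/-- The value at `p` of the quadratic polynomial with coefficient vector `c`. -/
def qval (c : Fin 6 → ℝ) (p : Pt) : ℝ :=
  c 0 * p.1 ^ 2 + c 1 * p.1 * p.2 + c 2 * p.2 ^ 2 + c 3 * p.1 + c 4 * p.2 + c 5

/-- `S` is a conic: the zero locus of a real polynomial of total degree 2. -/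
def IsConic (S : Set Pt) : Prop :=
  ∃ c : Fin 6 → ℝ, ¬(c 0 = 0 ∧ c 1 = 0 ∧ c 2 = 0) ∧ S = {p | qval c p = 0}

/-- `Z` is a center of symmetry of `S`. -/
def IsCenterOf (Z : Pt) (S : Set Pt) : Prop :=
  ∀ p ∈ S, (2 : ℝ) • Z - p ∈ S

/-- The gradient at `p` of the quadratic polynomial with coefficients `c`. -/
def qgrad (c : Fin 6 → ℝ) (p : Pt) : Pt :=
  (2 * c 0 * p.1 + c 1 * p.2 + c 3, c 1 * p.1 + 2 * c 2 * p.2 + c 4)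

/-- The line through `X` and `Y`. -/
def lineThru (X Y : Pt) : Set Pt := {p | ∃ t : ℝ, p = X + t • (Y - X)}

/-- `L` is the tangent line at the nonsingular point `p` of the conic with coefficients `c`. -/
def IsTangentLineAt (c : Fin 6 → ℝ) (L : Set Pt) (p : Pt) : Prop :=
  qval c p = 0 ∧ qgrad c p ≠ 0 ∧
  L = {q | (qgrad c p).1 * (q.1 - p.1) + (qgrad c p).2 * (q.2 - p.2) = 0}

/-- The cross product (determinant) of two plane vectors. -/
def cross (u v : Pt) : ℝ := u.1 * v.2 - u.2 * v.1

/-- Twice the polar bilinear form of the quadratic part of the polynomial with coefficients `c`. -/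
def polarForm (c : Fin 6 → ℝ) (u v : Pt) : ℝ :=
  2 * c 0 * u.1 * v.1 + c 1 * (u.1 * v.2 + u.2 * v.1) + 2 * c 2 * u.2 * v.2

theorem cross_eq_zero_of_par {u v : Pt} (h : Par u v) : cross u v = 0 := by
  obtain ⟨t, rfl | rfl⟩ := h <;> simp [cross] <;> ring

theorem exists_smul_of_cross_eq_zero {u v : Pt} (hv : v ≠ 0) (h : cross u v = 0) :
    ∃ t : ℝ, u = t • v := by
  unfold cross at h
  by_cases h1 : v.1 = 0
  · have h2 : v.2 ≠ 0 := fun h2 => hv (Prod.ext h1 h2)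
    refine ⟨u.2 / v.2, Prod.ext ?_ ?_⟩
    · simp only [Prod.smul_fst, smul_eq_mul]
      field_simp
      linarith
    · simp [h2]
  · refine ⟨u.1 / v.1, Prod.ext ?_ ?_⟩
    · simp [h1]
    · simp only [Prod.smul_snd, smul_eq_mul]
      field_simp
      linarith

theorem cross_eq_zero_trans {u v w : Pt} (hv : v ≠ 0) (huv : cross u v = 0)
    (hvw : cross v w = 0) : cross u w = 0 := by
  obtain ⟨t, rfl⟩ := exists_smul_of_cross_eq_zero hv huv
  unfold cross at *
  simp only [Prod.smul_fst, Prod.smul_snd, smul_eq_mul]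
  linear_combination t * hvw

theorem cross_comm_zero {u v : Pt} (h : cross u v = 0) : cross v u = 0 := by
  unfold cross at *
  linarith

theorem cross_eq_zero_of_collinear {X Y Z : Pt} (h : Collinear ℝ {X, Y, Z}) :
    cross (Y - X) (Z - X) = 0 := by
  obtain ⟨v, hv⟩ := (collinear_iff_of_mem (p₀ := X) (by simp)).1 h
  obtain ⟨r, rfl⟩ := hv Y (by simp)
  obtain ⟨s, rfl⟩ := hv Z (by simp)
  simp [cross]
  ring

theorem collinear_of_cross_eq_zero {X Y Z : Pt} (h : cross (Y - X) (Z - X) = 0) :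
    Collinear ℝ {X, Y, Z} := by
  by_cases hY : Y = X
  · subst hY
    simpa using collinear_pair ℝ Y Z
  · obtain ⟨t, ht⟩ :=
      exists_smul_of_cross_eq_zero (sub_ne_zero.2 hY) (cross_comm_zero h)
    refine (collinear_iff_of_mem (p₀ := X) (by simp)).2 ⟨Y - X, ?_⟩
    intro p hp
    rcases hp with rfl | rfl | rfl
    · exact ⟨0, by simp⟩
    · exact ⟨1, by simp⟩
    · exact ⟨t, by rw [← ht]; simp⟩

/-- The trace on `BC` of the cevian from `A` through the point with barycentrics `(x, y, z)`. -/
theorem trace_eq {A B C P D : Pt} {x y z : ℝ} (hABC : cross (B - A) (C - A) ≠ 0)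
    (hsum : x + y + z = 1) (hP : P = x • A + y • B + z • C) (hx : x ≠ 1)
    (hAPD : Collinear ℝ {A, P, D}) (hBCD : Collinear ℝ {B, C, D}) :
    D = (y / (y + z)) • B + (z / (y + z)) • C := by
  have hyz : y + z ≠ 0 := fun h => hx (by linarith)
  have h₁ := cross_eq_zero_of_collinear hAPD
  have h₂ := cross_eq_zero_of_collinear hBCD
  obtain rfl : x = 1 - y - z := by linarith
  subst hP
  simp only [cross, Prod.fst_sub, Prod.snd_sub, Prod.fst_add, Prod.snd_add, Prod.smul_fst,
    Prod.smul_snd, smul_eq_mul] at *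
  ext
  · simp only [Prod.fst_add, Prod.smul_fst, smul_eq_mul]
    field_simp
    apply mul_left_cancel₀ hABC
    linear_combination (C.1 - B.1) * h₁ - (y * (B.1 - A.1) + z * (C.1 - A.1)) * h₂
  · simp only [Prod.snd_add, Prod.smul_snd, smul_eq_mul]
    field_simp
    apply mul_left_cancel₀ hABC
    linear_combination (C.2 - B.2) * h₁ - (y * (B.2 - A.2) + z * (C.2 - A.2)) * h₂

/-- The isotomcomplement in barycentric coordinates. -/
theorem isotomcomplement_eq {A B C P' Q : Pt} {x y z : ℝ} (hst : x * y + y * z + z * x ≠ 0)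
    (hP' : P' = (y * z / (x * y + y * z + z * x)) • A
        + (x * z / (x * y + y * z + z * x)) • B
        + (x * y / (x * y + y * z + z * x)) • C)
    (hQ : Q = homoth (cent A B C) (-(1 / 2)) P') :
    Q = A + (y * (x + z) / (2 * (x * y + y * z + z * x))) • (B - A)
      + (z * (x + y) / (2 * (x * y + y * z + z * x))) • (C - A) := by
  generalize hσ : x * y + y * z + z * x = σ at *
  subst hQ hP'
  ext <;> simp [homoth, cent] <;> field_simp <;> rw [← hσ] <;> ring

/-- The isotomcomplement does not lie on the side line `BC`, so it differs from the trace. -/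
theorem trace_ne_isotomcomplement {A B C D Q : Pt} {x y z : ℝ}
    (hABC : cross (B - A) (C - A) ≠ 0) (hx : x ≠ 0) (hyz : y + z ≠ 0)
    (hst : x * y + y * z + z * x ≠ 0)
    (hD : D = (y / (y + z)) • B + (z / (y + z)) • C)
    (hQ : Q = A + (y * (x + z) / (2 * (x * y + y * z + z * x))) • (B - A)
      + (z * (x + y) / (2 * (x * y + y * z + z * x))) • (C - A)) :
    D - Q ≠ 0 := by
  intro h
  have key : cross (C - B) (D - Q) = -(x * (y + z) / (2 * (x * y + y * z + z * x)))
      * cross (B - A) (C - A) := by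
    generalize hσ : x * y + y * z + z * x = σ at *
    subst hD hQ
    simp [cross]
    field_simp
    rw [← hσ]
    ring
  rw [h] at key
  have h0 : cross (C - B) 0 = 0 := by simp [cross]
  rw [h0] at key
  have : x * (y + z) / (2 * (x * y + y * z + z * x)) ≠ 0 := by positivity
  exact mul_ne_zero (neg_ne_zero.2 this) hABC key.symm

/-- The line joining the generalized circumcenter to the midpoint of `BC` is not parallel
to `AB`. -/
theorem cross_midpoint_sub_ne_zero {A B C D E Q O : Pt} {x y z : ℝ}
    (hABC : cross (B - A) (C - A) ≠ 0)
    (hx : x ≠ 0) (hz : z ≠ 0) (hyz : y + z ≠ 0) (hxz : x + z ≠ 0)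
    (hst : x * y + y * z + z * x ≠ 0)
    (hD : D = (y / (y + z)) • B + (z / (y + z)) • C)
    (hE : E = (x / (x + z)) • A + (z / (x + z)) • C)
    (hQ : Q = A + (y * (x + z) / (2 * (x * y + y * z + z * x))) • (B - A)
      + (z * (x + y) / (2 * (x * y + y * z + z * x))) • (C - A))
    (hOD : cross (midpoint ℝ B C - O) (D - Q) = 0)
    (hOE : cross (midpoint ℝ C A - O) (E - Q) = 0)
    (hD₀ : O ≠ midpoint ℝ B C) (hE₀ : O ≠ midpoint ℝ C A) :
    cross (midpoint ℝ B C - O) (B - A) ≠ 0 := by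
  intro hpar
  have hD₁ : cross (B - A) (D - Q) = 0 :=
    cross_eq_zero_trans (sub_ne_zero.2 hD₀.symm) (cross_comm_zero hpar) hOD
  have hdiff : midpoint ℝ C A - O = midpoint ℝ B C - O - (1 / 2 : ℝ) • (B - A) := by
    ext <;> simp [midpoint_eq_smul_add] <;> ring
  have hpar' : cross (B - A) (midpoint ℝ C A - O) = 0 := by
    rw [hdiff]
    unfold cross at *
    simp only [Prod.fst_sub, Prod.snd_sub, Prod.smul_fst, Prod.smul_snd, smul_eq_mul] at *
    linarith
  have hE₁ : cross (B - A) (E - Q) = 0 :=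
    cross_eq_zero_trans (sub_ne_zero.2 hE₀.symm) hpar' hOE
  have hD₂ : cross (B - A) (D - Q) = (z / (y + z) - z * (x + y) /
      (2 * (x * y + y * z + z * x))) * cross (B - A) (C - A) := by
    subst hD hQ
    simp [cross]
    field_simp
    ring
  have hE₂ : cross (B - A) (E - Q) = (z / (x + z) - z * (x + y) /
      (2 * (x * y + y * z + z * x))) * cross (B - A) (C - A) := by
    subst hE hQ
    simp [cross]
    field_simp
    ring
  rw [hD₁, eq_comm, mul_eq_zero, or_iff_left hABC, sub_eq_zero,
    div_eq_div_iff hyz (by positivity)] at hD₂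
  rw [hE₁, eq_comm, mul_eq_zero, or_iff_left hABC, sub_eq_zero,
    div_eq_div_iff hxz (by positivity)] at hE₂
  have hy₂ : x * y + y * z + z * x = y ^ 2 :=
    mul_left_cancel₀ hz (by linear_combination hD₂)
  have hx₂ : x * y + y * z + z * x = x ^ 2 :=
    mul_left_cancel₀ hz (by linear_combination hE₂)
  have hxy : (x - y) * (x + y) = 0 := by linear_combination hy₂ - hx₂
  rcases mul_eq_zero.1 hxy with h | h
  · obtain rfl : x = y := by linarith
    exact mul_ne_zero hx hz (by linarith)
  · obtain rfl : y = -x := by linarith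
    exact pow_ne_zero 2 hx (by linarith)

/-- If the zero locus of a quadratic polynomial contains a triangle and is symmetric about `O`,
then the gradient of the polynomial vanishes at `O`. -/
theorem qgrad_eq_zero_of_isCenterOf {c : Fin 6 → ℝ} {A B C O : Pt}
    (hABC : cross (B - A) (C - A) ≠ 0)
    (hA : qval c A = 0) (hB : qval c B = 0) (hC : qval c C = 0)
    (hO : IsCenterOf O {p | qval c p = 0}) : qgrad c O = 0 := by
  have key : ∀ p, qval c p = 0 →
      (qgrad c O).1 * (p.1 - O.1) + (qgrad c O).2 * (p.2 - O.2) = 0 := by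
    intro p hp
    have h : qval c ((2 : ℝ) • O - p) = 0 := hO p hp
    simp only [qval, qgrad, Prod.fst_sub, Prod.snd_sub, Prod.smul_fst, Prod.smul_snd,
      smul_eq_mul] at *
    linear_combination (hp - h) / 2
  have hA' := key A hA
  have hB' := key B hB
  have hC' := key C hC
  simp only [cross, Prod.fst_sub, Prod.snd_sub] at hABC
  ext
  · apply mul_left_cancel₀ hABC
    rw [Prod.fst_zero]
    linear_combination (C.2 - A.2) * (hB' - hA') - (B.2 - A.2) * (hC' - hA')
  · apply mul_left_cancel₀ hABC
    rw [Prod.snd_zero]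
    linear_combination (B.1 - A.1) * (hC' - hA') - (C.1 - A.1) * (hB' - hA')

/-- A chord is conjugate to the line joining its midpoint to the center. -/
theorem polarForm_chord {c : Fin 6 → ℝ} {O X Y : Pt} (hO : qgrad c O = 0)
    (hX : qval c X = 0) (hY : qval c Y = 0) :
    polarForm c (X - Y) (X + Y - (2 : ℝ) • O) = 0 := by
  have h₁ := congrArg Prod.fst hO
  have h₂ := congrArg Prod.snd hO
  simp only [qval, qgrad, polarForm, Prod.fst_sub, Prod.snd_sub, Prod.fst_add, Prod.snd_add,
    Prod.smul_fst, Prod.smul_snd, smul_eq_mul, Prod.fst_zero, Prod.snd_zero] at *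
  linear_combination 2 * hX - 2 * hY - 2 * (X.1 - Y.1) * h₁ - 2 * (X.2 - Y.2) * h₂

/-- Two vectors conjugate to a vector outside the radical of the polar form are parallel. -/
theorem cross_eq_zero_of_polarForm {c : Fin 6 → ℝ} {n u v w : Pt} (hu : polarForm c n u = 0)
    (hv : polarForm c n v = 0) (hw : polarForm c n w ≠ 0) : cross u v = 0 := by
  apply mul_left_cancel₀ hw
  unfold polarForm cross at *
  linear_combination (w.1 * v.2 - w.2 * v.1) * hu - (w.1 * u.2 - w.2 * u.1) * hv

/-- The quadratic part vanishes when a basis consists of a vector in the radical of the polar form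
and an isotropic vector. -/
theorem quadratic_part_eq_zero {c : Fin 6 → ℝ} {n u : Pt} (hnu : cross n u ≠ 0)
    (hn : ∀ w, polarForm c n w = 0) (hu : polarForm c u u = 0) :
    c 0 = 0 ∧ c 1 = 0 ∧ c 2 = 0 := by
  have h₁ := hn (1, 0)
  have h₂ := hn (0, 1)
  simp only [polarForm, cross] at *
  have hsq := pow_ne_zero 2 hnu
  refine ⟨?_, ?_, ?_⟩ <;> apply mul_left_cancel₀ hsq
  · linear_combination n.2 ^ 2 / 2 * hu - u.1 * u.2 * n.2 * h₁ -
      u.2 ^ 2 / 2 * (n.2 * h₂ - n.1 * h₁)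
  · linear_combination -n.1 * n.2 * hu + u.1 ^ 2 * n.2 * h₁ + u.2 ^ 2 * n.1 * h₂
  · linear_combination n.1 ^ 2 / 2 * hu - u.1 * u.2 * n.1 * h₂ -
      u.1 ^ 2 / 2 * (n.1 * h₁ - n.2 * h₂)

theorem S1T1_parallel_BC
    (A B C P P' Q Q' D E F D₃ E₃ F₃ : Pt) (x y z : ℝ)
    (hABC : AffineIndependent ℝ ![A, B, C])
    (hsum : x + y + z = 1)
    (hPco : P = x • A + y • B + z • C)
    (hx0 : x ≠ 0) (hy0 : y ≠ 0) (hz0 : z ≠ 0)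
    (hx1 : x ≠ 1) (hy1 : y ≠ 1) (hz1 : z ≠ 1)
    (hst : x * y + y * z + z * x ≠ 0)
    (hP' : P' = (y * z / (x * y + y * z + z * x)) • A
        + (x * z / (x * y + y * z + z * x)) • B
        + (x * y / (x * y + y * z + z * x)) • C)
    (hQ : Q = homoth (cent A B C) (-(1 / 2)) P')
    (hQ' : Q' = homoth (cent A B C) (-(1 / 2)) P)
    (hD : Collinear ℝ {A, P, D} ∧ Collinear ℝ {B, C, D})
    (hE : Collinear ℝ {B, P, E} ∧ Collinear ℝ {A, C, E})
    (hF : Collinear ℝ {C, P, F} ∧ Collinear ℝ {A, B, F})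
    (hD₃ : Collinear ℝ {A, P', D₃} ∧ Collinear ℝ {B, C, D₃})
    (hE₃ : Collinear ℝ {B, P', E₃} ∧ Collinear ℝ {A, C, E₃})
    (hF₃ : Collinear ℝ {C, P', F₃} ∧ Collinear ℝ {A, B, F₃})
    (O H : Pt)
    (hO : Par (midpoint ℝ B C - O) (D - Q) ∧ Par (midpoint ℝ C A - O) (E - Q) ∧
          Par (midpoint ℝ A B - O) (F - Q))
    (hH : Par (H - A) (D - Q) ∧ Par (H - B) (E - Q) ∧ Par (H - C) (F - Q))
    (hOm1 : O ≠ midpoint ℝ B C) (hOm2 : O ≠ midpoint ℝ C A) (hOm3 : O ≠ midpoint ℝ A B)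
    (hOAH : ¬ Collinear ℝ {A, H, O})
    (CO : Set Pt)
    (hCO : IsConic CO) (hACO : A ∈ CO) (hBCO : B ∈ CO) (hCCO : C ∈ CO)
    (hOcen : IsCenterOf O CO)
    (hCOuniq : ∀ S : Set Pt, IsConic S → A ∈ S → B ∈ S → C ∈ S → IsCenterOf O S → S = CO)
    (S₁ T₁ : Pt)
    (hS₁ : S₁ ∈ CO ∧ Collinear ℝ {A, H, S₁} ∧ S₁ ≠ A)
    (hT₁ : T₁ = (2 : ℝ) • O - A) :
    Par (T₁ - S₁) (C - B) := by
  have hΔ : cross (B - A) (C - A) ≠ 0 := fun h =>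
    affineIndependent_iff_not_collinear_set.1 hABC (collinear_of_cross_eq_zero h)
  have hΔ₁ : cross (A - B) (C - B) ≠ 0 := by
    contrapose! hΔ
    unfold cross at *
    simp only [Prod.fst_sub, Prod.snd_sub] at *
    linarith
  have hΔ₂ : cross (A - C) (B - C) ≠ 0 := by
    contrapose! hΔ
    unfold cross at *
    simp only [Prod.fst_sub, Prod.snd_sub] at *
    linarith
  have hΔ₃ : cross (C - A) (B - A) ≠ 0 := fun h => hΔ (cross_comm_zero h)
  have hyz : y + z ≠ 0 := fun h => hx1 (by linarith)
  have hxz : x + z ≠ 0 := fun h => hy1 (by linarith)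
  have hxy : x + y ≠ 0 := fun h => hz1 (by linarith)
  have hDeq := trace_eq hΔ hsum hPco hx1 hD.1 hD.2
  have hEeq : E = (x / (x + z)) • A + (z / (x + z)) • C :=
    trace_eq hΔ₁ (by linarith) (by rw [hPco]; abel) hy1 hE.1 hE.2
  have hFeq : F = (x / (x + y)) • A + (y / (x + y)) • B :=
    trace_eq hΔ₂ (by linarith) (by rw [hPco]; abel) hz1 hF.1 hF.2
  have hQeq := isotomcomplement_eq hst hP' hQ
  have hDQ := trace_ne_isotomcomplement hΔ hx0 hyz hst hDeq hQeq
  set n : Pt := midpoint ℝ B C - O with hn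
  have hn0 : n ≠ 0 := sub_ne_zero.2 hOm1.symm
  have hnD : cross n (D - Q) = 0 := cross_eq_zero_of_par hO.1
  have hnAB : cross n (B - A) ≠ 0 :=
    cross_midpoint_sub_ne_zero hΔ hx0 hz0 hyz hxz hst hDeq hEeq hQeq hnD
      (cross_eq_zero_of_par hO.2.1) hOm1 hOm2
  have hnAC : cross n (C - A) ≠ 0 := by
    have hst' : x * z + z * y + y * x = x * y + y * z + z * x := by ring
    rw [hn, midpoint_comm]
    refine cross_midpoint_sub_ne_zero (x := x) (y := z) (z := y) (D := D) (E := F) (Q := Q)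
      hΔ₃ hx0 hy0 (by rwa [add_comm]) hxy (by rwa [hst'])
      (by rw [hDeq, add_comm z y]; abel) hFeq (by rw [hst', hQeq]; abel)
      (by rwa [midpoint_comm]) ?_ (by rwa [midpoint_comm]) (by rwa [midpoint_comm])
    rw [midpoint_comm]
    exact cross_eq_zero_of_par hO.2.2
  obtain ⟨c, hc, rfl⟩ := hCO
  obtain ⟨hS, hAHS, hSA⟩ := hS₁
  have hA0 : qval c A = 0 := hACO
  have hB0 : qval c B = 0 := hBCO
  have hC0 : qval c C = 0 := hCCO
  have hS0 : qval c S₁ = 0 := hS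
  have hgrad := qgrad_eq_zero_of_isCenterOf hΔ hA0 hB0 hC0 hOcen
  have hHA : H - A ≠ 0 := by
    intro h
    obtain rfl := sub_eq_zero.1 h
    exact hOAH (by simpa using collinear_pair ℝ H O)
  have hnS : cross n (S₁ - A) = 0 :=
    cross_eq_zero_trans hHA
      (cross_eq_zero_trans hDQ hnD (cross_comm_zero (cross_eq_zero_of_par hH.1)))
      (cross_eq_zero_of_collinear hAHS)
  obtain ⟨t, ht⟩ := exists_smul_of_cross_eq_zero (sub_ne_zero.2 hSA) hnS
  have hconjS : polarForm c n (T₁ - S₁) = 0 := by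
    have h := polarForm_chord hgrad hS0 hA0
    rw [ht, hT₁]
    unfold polarForm at *
    simp only [Prod.fst_sub, Prod.snd_sub, Prod.fst_add, Prod.snd_add, Prod.smul_fst,
      Prod.smul_snd, smul_eq_mul] at *
    linear_combination -t * h
  have hBC₀ : B + C - (2 : ℝ) • O = (2 : ℝ) • n := by
    rw [hn]
    ext <;> simp [midpoint_eq_smul_add] <;> ring
  have hconjBC : polarForm c n (C - B) = 0 := by
    have h := polarForm_chord hgrad hB0 hC0
    rw [hBC₀] at h
    unfold polarForm at *
    simp only [Prod.fst_sub, Prod.snd_sub, Prod.smul_fst, Prod.smul_snd, smul_eq_mul] at *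
    linear_combination -h / 2
  have hCB : C - B ≠ 0 := by
    intro h
    obtain rfl := sub_eq_zero.1 h
    exact hΔ (by simp [cross]; ring)
  obtain ⟨w, hw⟩ : ∃ w, polarForm c n w ≠ 0 := by
    by_contra! hrad
    have hAB := polarForm_chord hgrad hA0 hB0
    have hAB₀ : A + B - (2 : ℝ) • O = (2 : ℝ) • n - (C - A) := by
      rw [← hBC₀]
      abel
    have hconj : polarForm c (B - A) (C - A) = 0 := by
      have h := hrad (A - B)
      rw [hAB₀] at hAB
      clear_value n
      unfold polarForm at *
      simp only [Prod.fst_sub, Prod.snd_sub, Prod.smul_fst, Prod.smul_snd, smul_eq_mul] at *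
      linear_combination hAB - 2 * h
    have hself : polarForm c (B - A) (B - A) = 0 := by
      have h := hrad (B - A)
      apply mul_left_cancel₀ hnAC
      clear_value n
      unfold polarForm cross at *
      simp only [Prod.fst_sub, Prod.snd_sub] at *
      linear_combination (n.1 * (B.2 - A.2) - n.2 * (B.1 - A.1)) * hconj +
        ((B.1 - A.1) * (C.2 - A.2) - (B.2 - A.2) * (C.1 - A.1)) * h
    exact hc (quadratic_part_eq_zero hnAB hrad hself)
  obtain ⟨s, hs⟩ :=
    exists_smul_of_cross_eq_zero hCB (cross_eq_zero_of_polarForm hconjS hconjBC hw)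
  exact ⟨s, Or.inl hs⟩
end
end

section
/- Assume P does not lie on a median of ABC (a line joining a vertex to the midpoint of the opposite side). Let Z̃ be the reflection of K⁻¹(Z) through O. Then Z̃ lies on both the conic C_P and the circumconic C̃_O; indeed Z̃ is the fourth point of intersection of C_P and C̃_O, the other three being the vertices A, B, C. -/
noncomputable section

/-- Twice the signed area of the triangle `UVW`. -/
def signedArea (U V W : Pt) : ℝ :=
  (V.1 - U.1) * (W.2 - U.2) - (V.2 - U.2) * (W.1 - U.1)

theorem signedArea_rotate (U V W : Pt) : signedArea V W U = signedArea U V W := by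
  unfold signedArea; ring

theorem signedArea_ne_zero {A B C : Pt} (h : AffineIndependent ℝ ![A, B, C]) :
    signedArea A B C ≠ 0 := by
  intro hΔ
  unfold signedArea at hΔ
  apply affineIndependent_iff_not_collinear_set.1 h
  rw [collinear_iff_of_mem (p₀ := A) (by simp)]
  by_cases hB : B = A
  · refine ⟨C - A, ?_⟩
    rintro p (rfl | rfl | rfl)
    · exact ⟨0, by simp⟩
    · exact ⟨0, by simp [hB]⟩
    · exact ⟨1, by simp⟩
  · refine ⟨B - A, ?_⟩
    rintro p (rfl | rfl | rfl)
    · exact ⟨0, by simp⟩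
    · exact ⟨1, by simp⟩
    · by_cases h1 : B.1 - A.1 = 0
      · have h2 : B.2 - A.2 ≠ 0 := fun h2 =>
          hB (Prod.ext (sub_eq_zero.1 h1) (sub_eq_zero.1 h2))
        refine ⟨(p.2 - A.2) / (B.2 - A.2), Prod.ext ?_ ?_⟩ <;>
          simp only [vadd_eq_add, Prod.fst_add, Prod.snd_add, Prod.smul_fst, Prod.smul_snd,
            Prod.fst_sub, Prod.snd_sub, smul_eq_mul]
        · field_simp
          linear_combination -hΔ
        · field_simp
          ring
      · refine ⟨(p.1 - A.1) / (B.1 - A.1), Prod.ext ?_ ?_⟩ <;>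
          simp only [vadd_eq_add, Prod.fst_add, Prod.snd_add, Prod.smul_fst, Prod.smul_snd,
            Prod.fst_sub, Prod.snd_sub, smul_eq_mul]
        · field_simp
          ring
        · field_simp
          linear_combination hΔ

theorem signedArea_eq_zero_of_collinear {U V W : Pt} (h : Collinear ℝ {U, V, W}) :
    signedArea U V W = 0 := by
  rw [collinear_iff_of_mem (p₀ := U) (by simp)] at h
  obtain ⟨d, hd⟩ := h
  obtain ⟨r, hr⟩ := hd V (by simp)
  obtain ⟨t, ht⟩ := hd W (by simp)
  simp only [signedArea, hr, ht, vadd_eq_add, Prod.fst_add, Prod.snd_add, Prod.smul_fst,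
    Prod.smul_snd, smul_eq_mul]
  ring

theorem cross_eq_zero_of_par_s17 {u v : Pt} (h : Par u v) : u.1 * v.2 - u.2 * v.1 = 0 := by
  obtain ⟨t, rfl | rfl⟩ := h <;>
    simp only [Prod.smul_fst, Prod.smul_snd, smul_eq_mul] <;> ring

theorem exists_barycentric {A B C : Pt} (hΔ : signedArea A B C ≠ 0) (W : Pt) :
    ∃ X Y Z : ℝ, X + Y + Z = 1 ∧ W = X • A + Y • B + Z • C := by
  refine ⟨signedArea W B C / signedArea A B C, signedArea A W C / signedArea A B C,
    signedArea A B W / signedArea A B C, ?_, Prod.ext ?_ ?_⟩ <;>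
  simp [field] <;> unfold signedArea <;> ring

theorem signedArea_barycentric (A B C : Pt) {x₁ y₁ z₁ x₂ y₂ z₂ x₃ y₃ z₃ : ℝ}
    (h₁ : x₁ + y₁ + z₁ = 1) (h₂ : x₂ + y₂ + z₂ = 1) (h₃ : x₃ + y₃ + z₃ = 1) :
    signedArea (x₁ • A + y₁ • B + z₁ • C) (x₂ • A + y₂ • B + z₂ • C)
        (x₃ • A + y₃ • B + z₃ • C) =
      signedArea A B C * (x₁ * (y₂ * z₃ - z₂ * y₃) - y₁ * (x₂ * z₃ - z₂ * x₃)
        + z₁ * (x₂ * y₃ - y₂ * x₃)) := by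
  obtain rfl : x₁ = 1 - y₁ - z₁ := by linarith
  obtain rfl : x₂ = 1 - y₂ - z₂ := by linarith
  obtain rfl : x₃ = 1 - y₃ - z₃ := by linarith
  simp only [signedArea, Prod.fst_add, Prod.snd_add, Prod.smul_fst, Prod.smul_snd, smul_eq_mul]
  ring

theorem par_barycentric {A B C : Pt} (hΔ : signedArea A B C ≠ 0) {x₁ y₁ z₁ x₂ y₂ z₂ : ℝ}
    (h₁ : x₁ + y₁ + z₁ = 0) (h₂ : x₂ + y₂ + z₂ = 0)
    (h : Par (x₁ • A + y₁ • B + z₁ • C) (x₂ • A + y₂ • B + z₂ • C)) :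
    y₁ * z₂ = z₁ * y₂ := by
  obtain rfl : x₁ = - y₁ - z₁ := by linarith
  obtain rfl : x₂ = - y₂ - z₂ := by linarith
  have h := cross_eq_zero_of_par_s17 h
  simp only [Prod.fst_add, Prod.snd_add, Prod.smul_fst, Prod.smul_snd, smul_eq_mul] at h
  apply mul_left_cancel₀ hΔ
  unfold signedArea
  linear_combination h

/-- The set `S` has equation `pYZ + qZX + rXY = 0` in barycentric coordinates over `ABC`. -/
def HasCircumEq (A B C : Pt) (S : Set Pt) (p q r : ℝ) : Prop :=
  ∀ X Y Z : ℝ, X + Y + Z = 1 →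
    (X • A + Y • B + Z • C ∈ S ↔ p * Y * Z + q * Z * X + r * X * Y = 0)

theorem IsConic.exists_hasCircumEq {A B C : Pt} (hΔ : signedArea A B C ≠ 0) {S : Set Pt}
    (hS : IsConic S) (hA : A ∈ S) (hB : B ∈ S) (hC : C ∈ S) :
    ∃ p q r : ℝ, ¬(p = 0 ∧ q = 0 ∧ r = 0) ∧ HasCircumEq A B C S p q r := by
  obtain ⟨c, hc, rfl⟩ := hS
  simp only [Set.mem_ofPred_eq, qval] at hA hB hC
  refine ⟨-(c 0 * (B.1 - C.1) ^ 2 + c 1 * (B.1 - C.1) * (B.2 - C.2) + c 2 * (B.2 - C.2) ^ 2),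
    -(c 0 * (C.1 - A.1) ^ 2 + c 1 * (C.1 - A.1) * (C.2 - A.2) + c 2 * (C.2 - A.2) ^ 2),
    -(c 0 * (A.1 - B.1) ^ 2 + c 1 * (A.1 - B.1) * (A.2 - B.2) + c 2 * (A.2 - B.2) ^ 2), ?_, ?_⟩
  · rintro ⟨hp, hq, hr⟩
    apply hc
    have hΔ2 : signedArea A B C ^ 2 ≠ 0 := pow_ne_zero 2 hΔ
    refine ⟨mul_left_cancel₀ hΔ2 ?_, mul_left_cancel₀ hΔ2 ?_, mul_left_cancel₀ hΔ2 ?_⟩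
    · unfold signedArea
      linear_combination (-(C.2 - A.2) * (A.2 - B.2)) * -hp + (-(A.2 - B.2) * (B.2 - C.2)) * -hq
        + (-(B.2 - C.2) * (C.2 - A.2)) * -hr
    · unfold signedArea
      linear_combination
        ((C.1 - A.1) * (A.2 - B.2) + (C.2 - A.2) * (A.1 - B.1)) * -hp
        + ((A.1 - B.1) * (B.2 - C.2) + (A.2 - B.2) * (B.1 - C.1)) * -hq
        + ((B.1 - C.1) * (C.2 - A.2) + (B.2 - C.2) * (C.1 - A.1)) * -hr
    · unfold signedArea
      linear_combination (-(C.1 - A.1) * (A.1 - B.1)) * -hp + (-(A.1 - B.1) * (B.1 - C.1)) * -hq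
        + (-(B.1 - C.1) * (C.1 - A.1)) * -hr
  · intro X Y Z hX
    obtain rfl : X = 1 - Y - Z := by linarith
    simp only [Set.mem_ofPred_eq, qval, Prod.fst_add, Prod.snd_add, Prod.smul_fst, Prod.smul_snd,
      smul_eq_mul]
    refine Eq.congr_left ?_
    linear_combination (1 - Y - Z) * hA + Y * hB + Z * hC

theorem exists_isConic_hasCircumEq {A B C : Pt} (hΔ : signedArea A B C ≠ 0) {p q r : ℝ}
    (h : ¬(p = 0 ∧ q = 0 ∧ r = 0)) :
    ∃ S : Set Pt, IsConic S ∧ HasCircumEq A B C S p q r := by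
  have hΔ2 : signedArea A B C ^ 2 ≠ 0 := pow_ne_zero 2 hΔ
  set x₀ := B.1 * C.2 - B.2 * C.1 with hx₀
  set x₁ := B.2 - C.2 with hx₁
  set x₂ := C.1 - B.1 with hx₂
  set y₀ := C.1 * A.2 - C.2 * A.1 with hy₀
  set y₁ := C.2 - A.2 with hy₁
  set y₂ := A.1 - C.1 with hy₂
  set z₀ := A.1 * B.2 - A.2 * B.1 with hz₀
  set z₁ := A.2 - B.2 with hz₁
  set z₂ := B.1 - A.1 with hz₂
  let c : Fin 6 → ℝ := ![p * y₁ * z₁ + q * z₁ * x₁ + r * x₁ * y₁,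
    p * (y₁ * z₂ + y₂ * z₁) + q * (z₁ * x₂ + z₂ * x₁) + r * (x₁ * y₂ + x₂ * y₁),
    p * y₂ * z₂ + q * z₂ * x₂ + r * x₂ * y₂,
    p * (y₀ * z₁ + y₁ * z₀) + q * (z₀ * x₁ + z₁ * x₀) + r * (x₀ * y₁ + x₁ * y₀),
    p * (y₀ * z₂ + y₂ * z₀) + q * (z₀ * x₂ + z₂ * x₀) + r * (x₀ * y₂ + x₂ * y₀),
    p * y₀ * z₀ + q * z₀ * x₀ + r * x₀ * y₀]
  refine ⟨{W | qval c W = 0}, ⟨c, ?_, rfl⟩, ?_⟩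
  · rintro ⟨h0, h1, h2⟩
    simp only [c, Matrix.cons_val] at h0 h1 h2
    apply h
    refine ⟨mul_left_cancel₀ hΔ2 ?_, mul_left_cancel₀ hΔ2 ?_, mul_left_cancel₀ hΔ2 ?_⟩
    · unfold signedArea
      linear_combination (B.1 - C.1) ^ 2 * -h0 + (B.1 - C.1) * (B.2 - C.2) * -h1
        + (B.2 - C.2) ^ 2 * -h2
    · unfold signedArea
      linear_combination (C.1 - A.1) ^ 2 * -h0 + (C.1 - A.1) * (C.2 - A.2) * -h1
        + (C.2 - A.2) ^ 2 * -h2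
    · unfold signedArea
      linear_combination (A.1 - B.1) ^ 2 * -h0 + (A.1 - B.1) * (A.2 - B.2) * -h1
        + (A.2 - B.2) ^ 2 * -h2
  · intro X Y Z hX
    obtain rfl : X = 1 - Y - Z := by linarith
    have key : qval c ((1 - Y - Z) • A + Y • B + Z • C) = signedArea A B C ^ 2 *
        (p * Y * Z + q * Z * (1 - Y - Z) + r * (1 - Y - Z) * Y) := by
      simp only [qval, c, Matrix.cons_val, Prod.fst_add, Prod.snd_add, Prod.smul_fst,
        Prod.smul_snd, smul_eq_mul, signedArea, hx₀, hx₁, hx₂, hy₀, hy₁, hy₂, hz₀, hz₁, hz₂]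
      ring
    rw [Set.mem_ofPred_eq, key, mul_eq_zero, or_iff_right hΔ2]

theorem HasCircumEq.vertices_mem {A B C : Pt} {S : Set Pt} {p q r : ℝ}
    (h : HasCircumEq A B C S p q r) : A ∈ S ∧ B ∈ S ∧ C ∈ S := by
  have hA := h 1 0 0 (by norm_num)
  have hB := h 0 1 0 (by norm_num)
  have hC := h 0 0 1 (by norm_num)
  simpa using And.intro hA (And.intro hB hC)

/-- The polar relations between a circumconic and its center `uA + vB + wC`. -/
theorem HasCircumEq.center_eqs {A B C : Pt} {S : Set Pt} {p q r u v w : ℝ}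
    (h : HasCircumEq A B C S p q r) (hsum : u + v + w = 1)
    (hO : IsCenterOf (u • A + v • B + w • C) S) :
    ∃ τ : ℝ, q * w + r * v = τ ∧ r * u + p * w = τ ∧ p * v + q * u = τ := by
  obtain ⟨hA, hB, hC⟩ := h.vertices_mem
  have eA := hO A hA
  have eB := hO B hB
  have eC := hO C hC
  rw [show (2 : ℝ) • (u • A + v • B + w • C) - A
    = (2 * u - 1) • A + (2 * v) • B + (2 * w) • C by module, h _ _ _ (by linarith)] at eA
  rw [show (2 : ℝ) • (u • A + v • B + w • C) - B
    = (2 * u) • A + (2 * v - 1) • B + (2 * w) • C by module, h _ _ _ (by linarith)] at eB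
  rw [show (2 : ℝ) • (u • A + v • B + w • C) - C
    = (2 * u) • A + (2 * v) • B + (2 * w - 1) • C by module, h _ _ _ (by linarith)] at eC
  refine ⟨2 * (p * v * w + q * w * u + r * u * v), ?_, ?_, ?_⟩ <;> linarith

/-- The midpoint of a side is the center of several circumconics. -/
theorem not_unique_circumconic_of_center_midpoint {A B C O : Pt} (hΔ : signedArea A B C ≠ 0)
    (hO : O = (0 : ℝ) • A + (1 / 2 : ℝ) • B + (1 / 2 : ℝ) • C) {CO : Set Pt}
    (huniq : ∀ S : Set Pt, IsConic S → A ∈ S → B ∈ S → C ∈ S → IsCenterOf O S → S = CO) :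
    False := by
  obtain ⟨S, hS, hSe⟩ := exists_isConic_hasCircumEq (p := 1) (q := 1) (r := 0) hΔ (by norm_num)
  obtain ⟨T, hT, hTe⟩ := exists_isConic_hasCircumEq (p := 1) (q := 0) (r := 1) hΔ (by norm_num)
  have reflect : ∀ X Y Z : ℝ, (2 : ℝ) • O - (X • A + Y • B + Z • C)
      = (-X) • A + (1 - Y) • B + (1 - Z) • C := by
    intro X Y Z
    rw [hO]
    module
  have hSO : IsCenterOf O S := by
    intro W hW
    obtain ⟨X, Y, Z, hX, rfl⟩ := exists_barycentric hΔ W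
    rw [hSe _ _ _ hX] at hW
    rw [reflect, hSe _ _ _ (by linarith)]
    obtain rfl : X = 1 - Y - Z := by linarith
    linarith
  have hTO : IsCenterOf O T := by
    intro W hW
    obtain ⟨X, Y, Z, hX, rfl⟩ := exists_barycentric hΔ W
    rw [hTe _ _ _ hX] at hW
    rw [reflect, hTe _ _ _ (by linarith)]
    obtain rfl : X = 1 - Y - Z := by linarith
    linarith
  obtain ⟨hSA, hSB, hSC⟩ := hSe.vertices_mem
  obtain ⟨hTA, hTB, hTC⟩ := hTe.vertices_mem
  have hST : S = T :=
    (huniq S hS hSA hSB hSC hSO).trans (huniq T hT hTA hTB hTC hTO).symm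
  have h1 := hSe (-1) 2 0 (by norm_num)
  have h2 := hTe (-1) 2 0 (by norm_num)
  rw [hST, h2] at h1
  norm_num at h1

/-- The condition that the line from `O = uA + vB + wC` to the midpoint of `BC` is parallel to
the line joining `Q` to the trace `D` of `P`. -/
theorem midpoint_parallel_relation {A B C P Q D O : Pt} {x y z u v w : ℝ}
    (hΔ : signedArea A B C ≠ 0) (hsum : x + y + z = 1)
    (hP : P = x • A + y • B + z • C)
    (hQ : (2 * (x * y + y * z + z * x)) • Q
      = (x * (y + z)) • A + (y * (z + x)) • B + (z * (x + y)) • C)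
    (hAPD : Collinear ℝ {A, P, D}) (hBCD : Collinear ℝ {B, C, D})
    (huvw : u + v + w = 1) (hO : O = u • A + v • B + w • C)
    (hpar : Par (midpoint ℝ B C - O) (D - Q)) :
    (1 - 2 * v) * (z * (x * y + y * z + z * x - y ^ 2))
      = (1 - 2 * w) * (y * (x * y + y * z + z * x - z ^ 2)) := by
  obtain ⟨d₁, d₂, d₃, hd, rfl⟩ := exists_barycentric hΔ D
  obtain ⟨q₁, q₂, q₃, hq, rfl⟩ := exists_barycentric hΔ Q
  have hA : A = (1 : ℝ) • A + (0 : ℝ) • B + (0 : ℝ) • C := by module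
  have hB : B = (0 : ℝ) • A + (1 : ℝ) • B + (0 : ℝ) • C := by module
  have hC : C = (0 : ℝ) • A + (0 : ℝ) • B + (1 : ℝ) • C := by module
  have e1 := signedArea_eq_zero_of_collinear hAPD
  have e2 := signedArea_eq_zero_of_collinear hBCD
  have e1' : signedArea ((1 : ℝ) • A + (0 : ℝ) • B + (0 : ℝ) • C) (x • A + y • B + z • C)
      (d₁ • A + d₂ • B + d₃ • C) = 0 := by rw [← hA, ← hP]; exact e1
  have e2' : signedArea ((0 : ℝ) • A + (1 : ℝ) • B + (0 : ℝ) • C)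
      ((0 : ℝ) • A + (0 : ℝ) • B + (1 : ℝ) • C)
      (d₁ • A + d₂ • B + d₃ • C) = 0 := by rw [← hB, ← hC]; exact e2
  rw [signedArea_barycentric _ _ _ (by norm_num) hsum hd, mul_eq_zero, or_iff_right hΔ] at e1'
  rw [signedArea_barycentric _ _ _ (by norm_num) (by norm_num) hd, mul_eq_zero,
    or_iff_right hΔ] at e2'
  have hd1 : d₁ = 0 := by linarith
  subst hd1
  have hd2 : d₂ * (y + z) = y := by linear_combination y * hd - e1'
  have hd3 : d₃ * (y + z) = z := by linear_combination z * hd + e1'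
  obtain ⟨hq2, hq3⟩ : 2 * (x * y + y * z + z * x) * q₂ = y * (z + x) ∧
      2 * (x * y + y * z + z * x) * q₃ = z * (x + y) := by
    obtain rfl : q₁ = 1 - q₂ - q₃ := by linarith
    have k1 := congrArg Prod.fst hQ
    have k2 := congrArg Prod.snd hQ
    simp only [Prod.fst_add, Prod.snd_add, Prod.smul_fst, Prod.smul_snd, smul_eq_mul] at k1 k2
    constructor <;> apply mul_left_cancel₀ hΔ <;> unfold signedArea
    · linear_combination (C.2 - A.2) * k1 - (C.1 - A.1) * k2
    · linear_combination -(B.2 - A.2) * k1 + (B.1 - A.1) * k2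
  have hmid : midpoint ℝ B C = (1 / 2 : ℝ) • B + (1 / 2 : ℝ) • C := by
    rw [midpoint_eq_smul_add]
    norm_num
  rw [hmid, hO, show (1 / 2 : ℝ) • B + (1 / 2 : ℝ) • C - (u • A + v • B + w • C)
    = (-u) • A + (1 / 2 - v) • B + (1 / 2 - w) • C by module,
    show (0 : ℝ) • A + d₂ • B + d₃ • C - (q₁ • A + q₂ • B + q₃ • C)
    = (-q₁) • A + (d₂ - q₂) • B + (d₃ - q₃) • C by module] at hpar
  have e := par_barycentric hΔ (by linarith) (by linarith) hpar
  linear_combination 4 * (x * y + y * z + z * x) * (y + z) * e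
    - (1 - 2 * v) * 2 * (x * y + y * z + z * x) * hd3
    + (1 - 2 * w) * 2 * (x * y + y * z + z * x) * hd2
    + (1 - 2 * v) * (y + z) * hq3 - (1 - 2 * w) * (y + z) * hq2

theorem HasCircumEq.of_smul {A B C : Pt} {S : Set Pt} {k p q r p' q' r' : ℝ}
    (h : HasCircumEq A B C S p q r) (hne : ¬(p = 0 ∧ q = 0 ∧ r = 0))
    (hp : p = k * p') (hq : q = k * q') (hr : r = k * r') : HasCircumEq A B C S p' q' r' := by
  subst hp hq hr
  have hk : k ≠ 0 := by
    rintro rfl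
    simp at hne
  intro X Y Z hX
  rw [h X Y Z hX, show k * p' * Y * Z + k * q' * Z * X + k * r' * X * Y
    = k * (p' * Y * Z + q' * Z * X + r' * X * Y) by ring, mul_eq_zero, or_iff_right hk]

theorem circumconic_coeffs_through_P_Q {x y z p q r : ℝ}
    (hx0 : x ≠ 0) (hy0 : y ≠ 0) (hz0 : z ≠ 0) (hyz : y + z ≠ 0) (hne : z - y ≠ 0)
    (hP : p * y * z + q * z * x + r * x * y = 0)
    (hQ : p * (y * (z + x)) * (z * (x + y)) + q * (z * (x + y)) * (x * (y + z))
      + r * (x * (y + z)) * (y * (z + x)) = 0) :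
    ∃ k : ℝ, p = k * (x * (y + z) * (z - y)) ∧ q = k * (y * (z + x) * (x - z)) ∧
      r = k * (z * (x + y) * (y - x)) := by
  have hd : x * (y + z) * (z - y) ≠ 0 := mul_ne_zero (mul_ne_zero hx0 hyz) hne
  refine ⟨p / (x * (y + z) * (z - y)), (div_mul_cancel₀ _ hd).symm, ?_, ?_⟩
  · rw [div_mul_eq_mul_div, eq_div_iff hd]
    apply mul_left_cancel₀ hz0
    linear_combination -hQ + (y + z) * (z + x) * hP
  · rw [div_mul_eq_mul_div, eq_div_iff hd]
    apply mul_left_cancel₀ hy0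
    linear_combination hQ - (y + z) * (x + y) * hP

/-- Barycentric coordinates of the center of a circumconic. -/
theorem circumconic_center_coords {p q r u v w τ : ℝ} (hpqr : p * q * r ≠ 0)
    (hsum : u + v + w = 1)
    (h₁ : q * w + r * v = τ) (h₂ : r * u + p * w = τ) (h₃ : p * v + q * u = τ) :
    let σ := p * (q + r - p) + q * (r + p - q) + r * (p + q - r)
    σ ≠ 0 ∧ u * σ = p * (q + r - p) ∧ v * σ = q * (r + p - q) ∧ w * σ = r * (p + q - r) := by
  intro σ
  have e₁ : 2 * (p * q * r) * u = τ * (p * (q + r - p)) := by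
    linear_combination -p * p * h₁ + p * q * h₂ + p * r * h₃
  have e₂ : 2 * (p * q * r) * v = τ * (q * (r + p - q)) := by
    linear_combination q * p * h₁ - q * q * h₂ + q * r * h₃
  have e₃ : 2 * (p * q * r) * w = τ * (r * (p + q - r)) := by
    linear_combination r * p * h₁ + r * q * h₂ - r * r * h₃
  have e : 2 * (p * q * r) = τ * σ := by
    linear_combination e₁ + e₂ + e₃ - 2 * (p * q * r) * hsum
  have hτσ : τ * σ ≠ 0 := e ▸ mul_ne_zero two_ne_zero hpqr
  have hτ := left_ne_zero_of_mul hτσ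
  refine ⟨right_ne_zero_of_mul hτσ, mul_left_cancel₀ hτ ?_, mul_left_cancel₀ hτ ?_,
    mul_left_cancel₀ hτ ?_⟩
  · linear_combination e₁ - u * e
  · linear_combination e₂ - v * e
  · linear_combination e₃ - w * e

/-- Barycentric coordinates of the generalized orthocenter. -/
theorem orthocenter_coords {x y z s h₁ h₂ h₃ : ℝ} (hx0 : x ≠ 0)
    (hy : s - y ^ 2 ≠ 0) (hz : s - z ^ 2 ≠ 0) (hsum : h₁ + h₂ + h₃ = 1)
    (r₁ : h₂ * (z * (s - y ^ 2)) = h₃ * (y * (s - z ^ 2)))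
    (r₂ : h₃ * (x * (s - z ^ 2)) = h₁ * (z * (s - x ^ 2)))
    (r₃ : h₁ * (y * (s - x ^ 2)) = h₂ * (x * (s - y ^ 2))) :
    let σ := x * (s - y ^ 2) * (s - z ^ 2) + y * (s - z ^ 2) * (s - x ^ 2)
      + z * (s - x ^ 2) * (s - y ^ 2)
    σ ≠ 0 ∧ h₁ * σ = x * (s - y ^ 2) * (s - z ^ 2) ∧ h₂ * σ = y * (s - z ^ 2) * (s - x ^ 2) ∧
      h₃ * σ = z * (s - x ^ 2) * (s - y ^ 2) := by
  intro σ
  have e₁ : h₁ * σ = x * (s - y ^ 2) * (s - z ^ 2) := by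
    linear_combination (s - z ^ 2) * r₃ - (s - y ^ 2) * r₂
      + x * (s - y ^ 2) * (s - z ^ 2) * hsum
  refine ⟨?_, e₁, ?_, ?_⟩
  · intro hσ
    rw [hσ, mul_zero] at e₁
    exact mul_ne_zero (mul_ne_zero hx0 hy) hz e₁.symm
  · linear_combination (s - x ^ 2) * r₁ - (s - z ^ 2) * r₃
      + y * (s - z ^ 2) * (s - x ^ 2) * hsum
  · linear_combination (s - y ^ 2) * r₂ - (s - x ^ 2) * r₁
      + z * (s - x ^ 2) * (s - y ^ 2) * hsum

theorem circumconic_coeff_of_center {x y z α β γ Y Z σ τ h p v w : ℝ}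
    (hY : Y ≠ 0) (hZ : Z ≠ 0) (hv : 2 * v * σ = Y * (y * β ^ 2)) (hw : 2 * w * σ = Z * (z * γ ^ 2))
    (hp : 2 * p * v * w = τ * h) (hh : h * σ = x * Y * Z) :
    p * (x * y * z * (α * β * γ) ^ 2) = 2 * σ * τ * (x * α) ^ 2 := by
  apply mul_left_cancel₀ (mul_ne_zero hY hZ)
  linear_combination 2 * σ ^ 2 * x * α ^ 2 * hp
    - x * α ^ 2 * p * (2 * v * σ * hw + Z * (z * γ ^ 2) * hv)
    + 2 * σ * τ * x * α ^ 2 * hh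

/-- Coefficients of the circumconic whose center is the complement of the generalized
orthocenter. -/
theorem circumconic_coeffs_of_center {x y z h₁ h₂ h₃ σ p q r u v w τ : ℝ}
    (hx0 : x ≠ 0) (hy0 : y ≠ 0) (hz0 : z ≠ 0)
    (hyz : y + z ≠ 0) (hzx : z + x ≠ 0) (hxy : x + y ≠ 0)
    {s : ℝ} (hs : s = x * y + y * z + z * x)
    (hx : s - x ^ 2 ≠ 0) (hy : s - y ^ 2 ≠ 0) (hz : s - z ^ 2 ≠ 0)
    (e₁ : h₁ * σ = x * (s - y ^ 2) * (s - z ^ 2)) (e₂ : h₂ * σ = y * (s - z ^ 2) * (s - x ^ 2))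
    (e₃ : h₃ * σ = z * (s - x ^ 2) * (s - y ^ 2))
    (hu : 2 * u = h₂ + h₃) (hv : 2 * v = h₃ + h₁) (hw : 2 * w = h₁ + h₂)
    (t₁ : q * w + r * v = τ) (t₂ : r * u + p * w = τ) (t₃ : p * v + q * u = τ) :
    ∃ k : ℝ, p = k * (x * (y + z)) ^ 2 ∧ q = k * (y * (z + x)) ^ 2 ∧
      r = k * (z * (x + y)) ^ 2 := by
  have u₁ : 2 * u * σ = (s - x ^ 2) * (x * (y + z) ^ 2) := by
    rw [hu, add_mul, e₂, e₃, hs]; ring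
  have v₁ : 2 * v * σ = (s - y ^ 2) * (y * (z + x) ^ 2) := by
    rw [hv, add_mul, e₃, e₁, hs]; ring
  have w₁ : 2 * w * σ = (s - z ^ 2) * (z * (x + y) ^ 2) := by
    rw [hw, add_mul, e₁, e₂, hs]; ring
  have p₁ : 2 * p * v * w = τ * h₁ := by
    linear_combination -u * t₁ + v * t₂ + w * t₃ + τ / 2 * (hv + hw - hu)
  have q₁ : 2 * q * w * u = τ * h₂ := by
    linear_combination u * t₁ - v * t₂ + w * t₃ + τ / 2 * (hu + hw - hv)
  have r₁ : 2 * r * u * v = τ * h₃ := by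
    linear_combination u * t₁ + v * t₂ - w * t₃ + τ / 2 * (hu + hv - hw)
  have hd : x * y * z * ((y + z) * (z + x) * (x + y)) ^ 2 ≠ 0 := by positivity
  refine ⟨2 * σ * τ / (x * y * z * ((y + z) * (z + x) * (x + y)) ^ 2), ?_, ?_, ?_⟩ <;>
    rw [div_mul_eq_mul_div, eq_div_iff hd]
  · exact circumconic_coeff_of_center hy hz v₁ w₁ p₁ e₁
  · linear_combination circumconic_coeff_of_center (α := z + x) hz hx w₁ u₁ q₁ e₂
  · linear_combination circumconic_coeff_of_center (α := x + y) hx hy u₁ v₁ r₁ e₃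

/-- A coordinate of the cross product of the vectors `(x(y+z), y(z+x), z(x+y))` and
`(z-y, x-z, y-x)`. -/
def crossCoord (x y z : ℝ) : ℝ := z * (x + y) * (x - z) - y * (z + x) * (y - x)

/-- The reflection of the anticomplement of the center of `C_P` in `O`, in coordinates. -/
theorem fourth_point_coords {x y z s h₁ h₂ h₃ u v w p q r : ℝ}
    (hs : s = x * y + y * z + z * x)
    (hp : p = x * (y + z) * (z - y)) (hq : q = y * (z + x) * (x - z))
    (hr : r = z * (x + y) * (y - x))
    {σ σ' : ℝ} (hσ0 : σ ≠ 0) (hσ0' : σ' ≠ 0)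
    (hσ : σ = x * (s - y ^ 2) * (s - z ^ 2) + y * (s - z ^ 2) * (s - x ^ 2)
      + z * (s - x ^ 2) * (s - y ^ 2))
    (e₁ : h₁ * σ = x * (s - y ^ 2) * (s - z ^ 2)) (e₂ : h₂ * σ = y * (s - z ^ 2) * (s - x ^ 2))
    (e₃ : h₃ * σ = z * (s - x ^ 2) * (s - y ^ 2))
    (hσ' : σ' = p * (q + r - p) + q * (r + p - q) + r * (p + q - r))
    (c₁ : u * σ' = p * (q + r - p)) (c₂ : v * σ' = q * (r + p - q))
    (c₃ : w * σ' = r * (p + q - r)) :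
    ∃ ρ : ℝ, 2 * u - h₁ = ρ * (x * (y + z) * crossCoord y z x * crossCoord z x y) ∧
      2 * v - h₂ = ρ * (y * (z + x) * crossCoord z x y * crossCoord x y z) ∧
      2 * w - h₃ = ρ * (z * (x + y) * crossCoord x y z * crossCoord y z x) := by
  have hσσ : σ * σ' ≠ 0 := mul_ne_zero hσ0 hσ0'
  refine ⟨(y + z) * (z + x) * (x + y) / (σ * σ'), ?_, ?_, ?_⟩ <;>
    rw [div_mul_eq_mul_div, eq_div_iff hσσ]
  · calc (2 * u - h₁) * (σ * σ') = 2 * σ * (u * σ') - σ' * (h₁ * σ) := by ring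
      _ = _ := by rw [c₁, e₁, hσ, hσ', hp, hq, hr, hs]; unfold crossCoord; ring
  · calc (2 * v - h₂) * (σ * σ') = 2 * σ * (v * σ') - σ' * (h₂ * σ) := by ring
      _ = _ := by rw [c₂, e₂, hσ, hσ', hp, hq, hr, hs]; unfold crossCoord; ring
  · calc (2 * w - h₃) * (σ * σ') = 2 * σ * (w * σ') - σ' * (h₃ * σ) := by ring
      _ = _ := by rw [c₃, e₃, hσ, hσ', hp, hq, hr, hs]; unfold crossCoord; ring

/-- Common points of two circumconics with coefficient vectors `(a d₁, b d₂, c d₃)` and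
`(a², b², c²)`, apart from the vertices. -/
theorem circumconics_common_point {a b c d₁ d₂ d₃ m₁ m₂ m₃ ρ X Y Z X' Y' Z' : ℝ}
    (ha : a ≠ 0) (hb : b ≠ 0) (hc : c ≠ 0)
    (hm₁ : m₁ = c * d₂ - b * d₃) (hm₂ : m₂ = a * d₃ - c * d₁) (hm₃ : m₃ = b * d₁ - a * d₂)
    (hd : d₁ + d₂ + d₃ = 0) (hd₃ : d₃ ≠ 0) (habc : a + b + c ≠ 0)
    (hsum : X + Y + Z = 1) (hsum' : X' + Y' + Z' = 1)
    (hX' : X' = ρ * (a * m₂ * m₃)) (hY' : Y' = ρ * (b * m₃ * m₁)) (hZ' : Z' = ρ * (c * m₁ * m₂))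
    (f : a * d₁ * Y * Z + b * d₂ * Z * X + c * d₃ * X * Y = 0)
    (g : a ^ 2 * Y * Z + b ^ 2 * Z * X + c ^ 2 * X * Y = 0)
    (hA : ¬(Y = 0 ∧ Z = 0)) (hB : ¬(Z = 0 ∧ X = 0)) (hC : ¬(X = 0 ∧ Y = 0)) :
    X = X' ∧ Y = Y' ∧ Z = Z' := by
  have hX : X ≠ 0 := by
    rintro rfl
    simp_all
  have hY : Y ≠ 0 := by
    rintro rfl
    simp_all
  have hZ : Z ≠ 0 := by
    rintro rfl
    simp_all
  have k₁ : b * Z * m₃ = c * Y * m₂ := by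
    apply mul_left_cancel₀ hX
    rw [hm₂, hm₃]
    linear_combination d₁ * g - a * f
  have k₂ : c * X * m₁ = a * Z * m₃ := by
    apply mul_left_cancel₀ hY
    rw [hm₁, hm₃]
    linear_combination d₂ * g - b * f
  have k₃ : a * Y * m₂ = b * X * m₁ := by
    apply mul_left_cancel₀ hZ
    rw [hm₁, hm₂]
    linear_combination d₃ * g - c * f
  have key : ¬(m₁ = 0 ∧ m₂ = 0) := by
    rintro ⟨h₁, h₂⟩
    apply mul_ne_zero habc hd₃
    linear_combination c * hd + hm₁ - h₁ - hm₂ + h₂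
  have hm₁0 : m₁ ≠ 0 := by
    intro h
    rw [h, mul_zero] at k₃
    exact key ⟨h, (mul_eq_zero.1 k₃).resolve_left (mul_ne_zero ha hY)⟩
  have hm₂0 : m₂ ≠ 0 := by
    intro h
    rw [h, mul_zero] at k₃
    exact key ⟨(mul_eq_zero.1 k₃.symm).resolve_left (mul_ne_zero hb hX), h⟩
  have hm₃0 : m₃ ≠ 0 := by
    intro h
    rw [h, mul_zero] at k₂
    exact hm₁0 ((mul_eq_zero.1 k₂).resolve_left (mul_ne_zero hc hX))
  obtain ⟨κ, hκ⟩ : ∃ κ, X = κ * (a * m₂ * m₃) :=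
    ⟨X / (a * m₂ * m₃), by field_simp⟩
  have hκY : Y = κ * (b * m₃ * m₁) := by
    apply mul_left_cancel₀ (mul_ne_zero ha hm₂0)
    linear_combination k₃ + b * m₁ * hκ
  have hκZ : Z = κ * (c * m₁ * m₂) := by
    apply mul_left_cancel₀ (mul_ne_zero ha hm₃0)
    linear_combination -k₂ + c * m₁ * hκ
  obtain rfl : κ = ρ := by
    have hT : ρ * (a * m₂ * m₃ + b * m₃ * m₁ + c * m₁ * m₂) = 1 := by
      rw [← hsum', hX', hY', hZ']; ring
    refine mul_right_cancel₀ (right_ne_zero_of_mul (hT ▸ one_ne_zero)) (Eq.trans ?_ hT.symm)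
    rw [← hsum, hκ, hκY, hκZ]; ring
  exact ⟨hκ.trans hX'.symm, hκY.trans hY'.symm, hκZ.trans hZ'.symm⟩

/-- Barycentric coordinates of the isotomcomplement. -/
theorem isotomcomplement_coords (A B C : Pt) {x y z s : ℝ} (hs : s = x * y + y * z + z * x)
    (hs0 : s ≠ 0) :
    homoth (cent A B C) (-(1 / 2)) ((y * z / s) • A + (x * z / s) • B + (x * y / s) • C)
      = (x * (y + z) / (2 * s)) • A + (y * (z + x) / (2 * s)) • B
        + (z * (x + y) / (2 * s)) • C := by
  have h₁ : x * (y + z) / (2 * s) = 1 / 2 - y * z / s / 2 := by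
    field_simp
    rw [hs]; ring
  have h₂ : y * (z + x) / (2 * s) = 1 / 2 - x * z / s / 2 := by
    field_simp
    rw [hs]; ring
  have h₃ : z * (x + y) / (2 * s) = 1 / 2 - x * y / s / 2 := by
    field_simp
    rw [hs]; ring
  rw [h₁, h₂, h₃, homoth, cent]
  module

theorem Ztilde_fourth_intersection
    (A B C P P' Q Q' D E F D₃ E₃ F₃ : Pt) (x y z : ℝ)
    (hABC : AffineIndependent ℝ ![A, B, C])
    (hsum : x + y + z = 1)
    (hPco : P = x • A + y • B + z • C)
    (hx0 : x ≠ 0) (hy0 : y ≠ 0) (hz0 : z ≠ 0)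
    (hx1 : x ≠ 1) (hy1 : y ≠ 1) (hz1 : z ≠ 1)
    (hst : x * y + y * z + z * x ≠ 0)
    (hP' : P' = (y * z / (x * y + y * z + z * x)) • A
        + (x * z / (x * y + y * z + z * x)) • B
        + (x * y / (x * y + y * z + z * x)) • C)
    (hQ : Q = homoth (cent A B C) (-(1 / 2)) P')
    (hQ' : Q' = homoth (cent A B C) (-(1 / 2)) P)
    (hD : Collinear ℝ {A, P, D} ∧ Collinear ℝ {B, C, D})
    (hE : Collinear ℝ {B, P, E} ∧ Collinear ℝ {A, C, E})
    (hF : Collinear ℝ {C, P, F} ∧ Collinear ℝ {A, B, F})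
    (hD₃ : Collinear ℝ {A, P', D₃} ∧ Collinear ℝ {B, C, D₃})
    (hE₃ : Collinear ℝ {B, P', E₃} ∧ Collinear ℝ {A, C, E₃})
    (hF₃ : Collinear ℝ {C, P', F₃} ∧ Collinear ℝ {A, B, F₃})
    (hxy : x ≠ y) (hyz : y ≠ z) (hxz : x ≠ z)
    (O H : Pt)
    (hO : Par (midpoint ℝ B C - O) (D - Q) ∧ Par (midpoint ℝ C A - O) (E - Q) ∧
          Par (midpoint ℝ A B - O) (F - Q))
    (hH : Par (H - A) (D - Q) ∧ Par (H - B) (E - Q) ∧ Par (H - C) (F - Q))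
    (CO : Set Pt)
    (hCO : IsConic CO) (hACO : A ∈ CO) (hBCO : B ∈ CO) (hCCO : C ∈ CO)
    (hOcen : IsCenterOf O CO)
    (hCOuniq : ∀ S : Set Pt, IsConic S → A ∈ S → B ∈ S → C ∈ S → IsCenterOf O S → S = CO)
    (CP : Set Pt) (Z : Pt)
    (hCPc : IsConic CP) (hACP : A ∈ CP) (hBCP : B ∈ CP) (hCCP : C ∈ CP)
    (hPCP : P ∈ CP) (hQCP : Q ∈ CP)
    (hCPuniq : ∀ S : Set Pt, IsConic S → A ∈ S → B ∈ S → C ∈ S → P ∈ S → Q ∈ S → S = CP)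
    (hZ : IsCenterOf Z CP) (hZuniq : ∀ W : Pt, IsCenterOf W CP → W = Z)
    (Zt : Pt) (hZt : Zt = (2 : ℝ) • O - homoth (cent A B C) (-2) Z) :
    Zt ∈ CP ∧ Zt ∈ CO ∧
    (∀ W : Pt, W ∈ CP → W ∈ CO → W = A ∨ W = B ∨ W = C ∨ W = Zt) := by
  have hΔ := signedArea_ne_zero hABC
  have hΔB : signedArea B C A ≠ 0 := by rwa [signedArea_rotate]
  have hΔC : signedArea C A B ≠ 0 := by rwa [signedArea_rotate, signedArea_rotate]
  have hyz' : y + z ≠ 0 := fun h => hx1 (by linarith)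
  have hzx' : z + x ≠ 0 := fun h => hy1 (by linarith)
  have hxy' : x + y ≠ 0 := fun h => hz1 (by linarith)
  obtain ⟨s, hs⟩ : ∃ s, s = x * y + y * z + z * x := ⟨_, rfl⟩
  rw [← hs] at hst hP'
  have hQ₁ : Q = (x * (y + z) / (2 * s)) • A + (y * (z + x) / (2 * s)) • B
      + (z * (x + y) / (2 * s)) • C := by
    rw [hQ, hP', isotomcomplement_coords A B C hs hst]
  have hQ₂ : (2 * s) • Q = (x * (y + z)) • A + (y * (z + x)) • B + (z * (x + y)) • C := by
    have h2s : 2 * s ≠ 0 := mul_ne_zero two_ne_zero hst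
    rw [hQ₁]
    simp only [smul_add, smul_smul, mul_div_cancel₀ _ h2s]
  obtain ⟨u, v, w, huvw, hOc⟩ := exists_barycentric hΔ O
  obtain ⟨ζ₁, ζ₂, ζ₃, hζ, hZc⟩ := exists_barycentric hΔ Z
  have r₁ := midpoint_parallel_relation hΔ hsum hPco (hs ▸ hQ₂) hD.1 hD.2 huvw hOc hO.1
  have r₂ := midpoint_parallel_relation (P := P) (Q := Q) (x := y) (y := z) (z := x)
    (u := v) (v := w) (w := u) hΔB
    (by linarith) (by rw [hPco]; abel)
    (by rw [show y * z + z * x + x * y = s by rw [hs]; ring, hQ₂]; abel)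
    hE.1 (by rw [Set.insert_comm]; exact hE.2) (by linarith) (by rw [hOc]; abel) hO.2.1
  have r₃ := midpoint_parallel_relation (P := P) (Q := Q) (x := z) (y := x) (z := y)
    (u := w) (v := u) (w := v) hΔC
    (by linarith) (by rw [hPco]; abel)
    (by rw [show z * x + x * y + y * z = s by rw [hs]; ring, hQ₂]; abel)
    hF.1 hF.2 (by linarith) (by rw [hOc]; abel) hO.2.2
  rw [← hs] at r₁
  rw [show y * z + z * x + x * y = s by rw [hs]; ring] at r₂
  rw [show z * x + x * y + y * z = s by rw [hs]; ring] at r₃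
  have sq_ne : ∀ {a b : ℝ}, a ≠ b → a + b ≠ 0 → a ^ 2 - b ^ 2 ≠ 0 := by
    intro a b h h'
    rw [sq_sub_sq]
    exact mul_ne_zero h' (sub_ne_zero.2 h)
  have hsx : s - x ^ 2 ≠ 0 := by
    intro h
    have hy2 : s - y ^ 2 ≠ 0 := by
      rw [sub_eq_zero.1 h]; exact sq_ne hxy hxy'
    have hz2 : s - z ^ 2 ≠ 0 := by
      rw [sub_eq_zero.1 h]; exact sq_ne hxz (by rwa [add_comm])
    rw [h, mul_zero, mul_zero] at r₂ r₃
    have hw := (mul_eq_zero.1 r₂).resolve_right (mul_ne_zero hx0 hz2)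
    have hv := (mul_eq_zero.1 r₃.symm).resolve_right (mul_ne_zero hx0 hy2)
    obtain rfl : w = 1 / 2 := by linarith
    obtain rfl : v = 1 / 2 := by linarith
    obtain rfl : u = 0 := by linarith
    exact not_unique_circumconic_of_center_midpoint hΔ hOc hCOuniq
  have hsy : s - y ^ 2 ≠ 0 := by
    intro h
    have hz2 : s - z ^ 2 ≠ 0 := by
      rw [sub_eq_zero.1 h]; exact sq_ne hyz hyz'
    rw [h, mul_zero, mul_zero] at r₁ r₃
    have hw := (mul_eq_zero.1 r₁.symm).resolve_right (mul_ne_zero hy0 hz2)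
    have hu := (mul_eq_zero.1 r₃).resolve_right (mul_ne_zero hy0 hsx)
    obtain rfl : w = 1 / 2 := by linarith
    obtain rfl : u = 1 / 2 := by linarith
    obtain rfl : v = 0 := by linarith
    exact not_unique_circumconic_of_center_midpoint hΔB (hOc.trans (by abel))
      (fun S hS hB hC hA => hCOuniq S hS hA hB hC)
  have hsz : s - z ^ 2 ≠ 0 := by
    intro h
    rw [h, mul_zero, mul_zero] at r₁ r₂
    have hv := (mul_eq_zero.1 r₁).resolve_right (mul_ne_zero hz0 hsy)
    have hu := (mul_eq_zero.1 r₂.symm).resolve_right (mul_ne_zero hz0 hsx)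
    obtain rfl : v = 1 / 2 := by linarith
    obtain rfl : u = 1 / 2 := by linarith
    obtain rfl : w = 0 := by linarith
    exact not_unique_circumconic_of_center_midpoint hΔC (hOc.trans (by abel))
      (fun S hS hC hA hB => hCOuniq S hS hA hB hC)
  obtain ⟨hσ, e₁, e₂, e₃⟩ := orthocenter_coords (h₁ := 1 - 2 * u) (h₂ := 1 - 2 * v)
    (h₃ := 1 - 2 * w) hx0 hsy hsz (by linarith) r₁ r₂ r₃
  have hCOeq : HasCircumEq A B C CO ((x * (y + z)) ^ 2) ((y * (z + x)) ^ 2)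
      ((z * (x + y)) ^ 2) := by
    obtain ⟨p, q, r, hne, hpqr⟩ := hCO.exists_hasCircumEq hΔ hACO hBCO hCCO
    obtain ⟨τ, t₁, t₂, t₃⟩ := hpqr.center_eqs huvw (hOc ▸ hOcen)
    obtain ⟨k, hp, hq, hr⟩ := circumconic_coeffs_of_center hx0 hy0 hz0 hyz' hzx' hxy' hs
      hsx hsy hsz e₁ e₂ e₃ (by linarith) (by linarith) (by linarith) t₁ t₂ t₃
    exact hpqr.of_smul hne hp hq hr
  have hCPeq : HasCircumEq A B C CP (x * (y + z) * (z - y)) (y * (z + x) * (x - z))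
      (z * (x + y) * (y - x)) := by
    obtain ⟨p, q, r, hne, hpqr⟩ := hCPc.exists_hasCircumEq hΔ hACP hBCP hCCP
    rw [hPco, hpqr _ _ _ hsum] at hPCP
    rw [hQ₁, hpqr _ _ _ (by field_simp; rw [hs]; ring)] at hQCP
    field_simp at hQCP
    obtain ⟨k, hp, hq, hr⟩ := circumconic_coeffs_through_P_Q hx0 hy0 hz0 hyz'
      (sub_ne_zero.2 hyz.symm) hPCP (by linear_combination hQCP)
    exact hpqr.of_smul hne hp hq hr
  obtain ⟨τ, t₁, t₂, t₃⟩ := hCPeq.center_eqs hζ (hZc ▸ hZ)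
  have ha : x * (y + z) ≠ 0 := mul_ne_zero hx0 hyz'
  have hb : y * (z + x) ≠ 0 := mul_ne_zero hy0 hzx'
  have hc : z * (x + y) ≠ 0 := mul_ne_zero hz0 hxy'
  obtain ⟨hσ', c₁, c₂, c₃⟩ := circumconic_center_coords
    (mul_ne_zero (mul_ne_zero (mul_ne_zero ha (sub_ne_zero.2 hyz.symm))
      (mul_ne_zero hb (sub_ne_zero.2 hxz))) (mul_ne_zero hc (sub_ne_zero.2 hxy.symm))) hζ t₁ t₂ t₃
  obtain ⟨ρ, z₁, z₂, z₃⟩ := fourth_point_coords hs rfl rfl rfl hσ hσ' rfl e₁ e₂ e₃ rfl c₁ c₂ c₃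
  have hZtc : Zt = (2 * ζ₁ - (1 - 2 * u)) • A + (2 * ζ₂ - (1 - 2 * v)) • B
      + (2 * ζ₃ - (1 - 2 * w)) • C := by
    rw [hZt, hOc, hZc, homoth, cent]
    module
  have hZts : (2 * ζ₁ - (1 - 2 * u)) + (2 * ζ₂ - (1 - 2 * v)) + (2 * ζ₃ - (1 - 2 * w)) = 1 := by
    linarith
  refine ⟨?_, ?_, ?_⟩
  · rw [hZtc, hCPeq _ _ _ hZts, z₁, z₂, z₃]
    unfold crossCoord
    ring
  · rw [hZtc, hCOeq _ _ _ hZts, z₁, z₂, z₃]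
    unfold crossCoord
    ring
  · intro W hWP hWO
    obtain ⟨X, Y, T, hXYT, rfl⟩ := exists_barycentric hΔ W
    rw [hCPeq _ _ _ hXYT] at hWP
    rw [hCOeq _ _ _ hXYT] at hWO
    by_contra! hV
    obtain ⟨hWA, hWB, hWC, hWZ⟩ := hV
    obtain ⟨k₁, k₂, k₃⟩ := circumconics_common_point (m₁ := crossCoord x y z)
      (m₂ := crossCoord y z x) (m₃ := crossCoord z x y) ha hb hc rfl rfl rfl (by ring)
      (sub_ne_zero.2 hxy.symm)
      (fun h => hst (by linarith)) hXYT hZts z₁ z₂ z₃ hWP hWO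
      (by
        rintro ⟨rfl, rfl⟩
        obtain rfl : X = 1 := by linarith
        exact hWA (by module))
      (by
        rintro ⟨rfl, rfl⟩
        obtain rfl : Y = 1 := by linarith
        exact hWB (by module))
      (by
        rintro ⟨rfl, rfl⟩
        obtain rfl : T = 1 := by linarith
        exact hWC (by module))
    exact hWZ (by rw [hZtc, ← k₁, ← k₂, ← k₃])
end
end

section
/- Assume the generalized orthocenter H of P is defined. Then the following are equivalent: (a) H = A; (b) AFQE is a parallelogram, i.e. F − A = Q − E as vectors (equivalently E − A = Q − F); (c) F₃ lies on the line through E₀ and the midpoint of segment BE (which equals K(E₃)); (d) E₃ lies on the line through F₀ and the midpoint of segment CF (which equals K(F₃)). -/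
noncomputable section

/-- Twice the signed area of the triangle `XYZ`. -/
def area (X Y Z : Pt) : ℝ :=
  (Y.1 - X.1) * (Z.2 - X.2) - (Y.2 - X.2) * (Z.1 - X.1)

lemma collinear_iff_area_eq_zero (X Y Z : Pt) :
    Collinear ℝ {X, Y, Z} ↔ area X Y Z = 0 := by
  rw [collinear_iff_of_mem (p₀ := X) (by simp)]
  constructor
  · rintro ⟨v, hv⟩
    obtain ⟨s, hs⟩ := hv Y (by simp)
    obtain ⟨t, ht⟩ := hv Z (by simp)
    subst hs ht
    simp only [area, vadd_eq_add, Prod.fst_add, Prod.snd_add, Prod.smul_fst, Prod.smul_snd,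
      smul_eq_mul]
    ring
  · intro h
    unfold area at h
    by_cases hXY : Y = X
    · subst hXY
      refine ⟨Z - Y, ?_⟩
      rintro p (rfl | rfl | rfl)
      exacts [⟨0, by simp⟩, ⟨0, by simp⟩, ⟨1, by simp⟩]
    · refine ⟨Y - X, ?_⟩
      rintro p (rfl | rfl | rfl)
      · exact ⟨0, by simp⟩
      · exact ⟨1, by simp⟩
      · by_cases h1 : Y.1 - X.1 = 0
        · have h2 : Y.2 - X.2 ≠ 0 := fun h2 =>
            hXY (Prod.ext (sub_eq_zero.mp h1) (sub_eq_zero.mp h2))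
          refine ⟨(p.2 - X.2) / (Y.2 - X.2), Prod.ext ?_ ?_⟩ <;>
            simp only [vadd_eq_add, Prod.fst_add, Prod.snd_add, Prod.smul_fst, Prod.smul_snd,
              smul_eq_mul, Prod.fst_sub, Prod.snd_sub] <;> field_simp <;> linarith
        · refine ⟨(p.1 - X.1) / (Y.1 - X.1), Prod.ext ?_ ?_⟩ <;>
            simp only [vadd_eq_add, Prod.fst_add, Prod.snd_add, Prod.smul_fst, Prod.smul_snd,
              smul_eq_mul, Prod.fst_sub, Prod.snd_sub] <;> field_simp <;> linarith

lemma area_ne_zero_of_affineIndependent {A B C : Pt} (h : AffineIndependent ℝ ![A, B, C]) :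
    area A B C ≠ 0 := by
  rwa [affineIndependent_iff_not_collinear_set, collinear_iff_area_eq_zero] at h

lemma area_swap (A B C : Pt) : area A C B = -area A B C := by
  unfold area; ring

/-- The point with affine coordinates `(u, v)` in the frame with origin `A` and basis
`B - A`, `C - A`. -/
def framePt (A B C : Pt) (u v : ℝ) : Pt := A + u • (B - A) + v • (C - A)

lemma framePt_fst (A B C : Pt) (u v : ℝ) :
    (framePt A B C u v).1 = A.1 + u * (B.1 - A.1) + v * (C.1 - A.1) := by
  simp [framePt]

lemma framePt_snd (A B C : Pt) (u v : ℝ) :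
    (framePt A B C u v).2 = A.2 + u * (B.2 - A.2) + v * (C.2 - A.2) := by
  simp [framePt]

lemma framePt_swap (A B C : Pt) (u v : ℝ) : framePt A C B v u = framePt A B C u v := by
  unfold framePt; abel

lemma area_framePt (A B C : Pt) (u₁ v₁ u₂ v₂ u₃ v₃ : ℝ) :
    area (framePt A B C u₁ v₁) (framePt A B C u₂ v₂) (framePt A B C u₃ v₃) =
      ((u₂ - u₁) * (v₃ - v₁) - (v₂ - v₁) * (u₃ - u₁)) * area A B C := by
  simp only [area, framePt_fst, framePt_snd]; ring

/-- Cramer's rule in the affine frame `A, B, C`. -/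
lemma eq_framePt {A B C : Pt} (h : area A B C ≠ 0) (X : Pt) :
    X = framePt A B C (area A X C / area A B C) (area A B X / area A B C) := by
  ext
  · rw [framePt_fst]; field_simp; unfold area; ring
  · rw [framePt_snd]; field_simp; unfold area; ring

lemma framePt_injective {A B C : Pt} (h : area A B C ≠ 0) {u v u' v' : ℝ}
    (he : framePt A B C u v = framePt A B C u' v') : u = u' ∧ v = v' := by
  have h1 := congrArg Prod.fst he
  have h2 := congrArg Prod.snd he
  simp only [framePt_fst, framePt_snd] at h1 h2
  constructor <;> apply mul_right_cancel₀ h <;> unfold area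
  · linear_combination (C.2 - A.2) * h1 - (C.1 - A.1) * h2
  · linear_combination (B.1 - A.1) * h2 - (B.2 - A.2) * h1

lemma smul_add_eq_framePt (A B C : Pt) {x y z : ℝ} (h : x + y + z = 1) :
    x • A + y • B + z • C = framePt A B C y z := by
  obtain rfl : x = 1 - y - z := by linarith
  ext <;> simp [framePt] <;> ring

/-- The complement map in affine coordinates. -/
lemma homoth_cent_framePt (A B C : Pt) (u v : ℝ) :
    homoth (cent A B C) (-(1 / 2)) (framePt A B C u v) =
      framePt A B C ((1 - u) / 2) ((1 - v) / 2) := by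
  ext <;> simp [homoth, cent, framePt] <;> ring

lemma midpoint_eq_smul_add_smul (X Y : Pt) :
    midpoint ℝ X Y = (1 / 2 : ℝ) • X + (1 / 2 : ℝ) • Y := by
  rw [midpoint_eq_smul_add, smul_add]; norm_num

/-- The trace on `AB` of the cevian through `C` of the point with affine coordinates `(u, v)`. -/
lemma trace_eq_s18 {A B C F : Pt} {u v : ℝ} (h : area A B C ≠ 0) (hv : 1 - v ≠ 0)
    (h₁ : Collinear ℝ {C, framePt A B C u v, F}) (h₂ : Collinear ℝ {A, B, F}) :
    F = framePt A B C (u / (1 - v)) 0 := by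
  rw [collinear_iff_area_eq_zero] at h₁ h₂
  have hF := eq_framePt h F
  rw [h₂, zero_div] at hF
  generalize area A F C / area A B C = f at hF
  subst hF
  have hC : C = framePt A B C 0 1 := by simp [framePt]
  have h₃ : area (framePt A B C 0 1) (framePt A B C u v) (framePt A B C f 0) = 0 := by
    rwa [← hC]
  rw [area_framePt] at h₃
  have h₄ := (mul_eq_zero.mp h₃).resolve_right h
  congr 1
  rw [eq_div_iff hv]
  linarith

/-- Parallelism of difference vectors in affine coordinates. -/
lemma Par.framePt_eq {A B C : Pt} (h : area A B C ≠ 0) {u₁ v₁ u₂ v₂ u₃ v₃ u₄ v₄ : ℝ}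
    (hp : Par (framePt A B C u₁ v₁ - framePt A B C u₂ v₂)
      (framePt A B C u₃ v₃ - framePt A B C u₄ v₄)) :
    (u₁ - u₂) * (v₃ - v₄) = (v₁ - v₂) * (u₃ - u₄) := by
  obtain ⟨t, ht⟩ := hp
  apply mul_right_cancel₀ h
  rcases ht with ht | ht
  all_goals
    have h1 := congrArg Prod.fst ht
    have h2 := congrArg Prod.snd ht
    simp only [Prod.fst_sub, Prod.snd_sub, Prod.smul_fst, Prod.smul_snd, smul_eq_mul,
      framePt_fst, framePt_snd] at h1 h2
    unfold area
  · linear_combination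
      ((u₃ - u₄) * (B.2 - A.2) + (v₃ - v₄) * (C.2 - A.2)) * h1 -
      ((u₃ - u₄) * (B.1 - A.1) + (v₃ - v₄) * (C.1 - A.1)) * h2
  · linear_combination
      ((u₁ - u₂) * (B.1 - A.1) + (v₁ - v₂) * (C.1 - A.1)) * h2 -
      ((u₁ - u₂) * (B.2 - A.2) + (v₁ - v₂) * (C.2 - A.2)) * h1

theorem H_eq_A_equivalences
    (A B C P P' Q Q' D E F D₃ E₃ F₃ : Pt) (x y z : ℝ)
    (hABC : AffineIndependent ℝ ![A, B, C])
    (hsum : x + y + z = 1)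
    (hPco : P = x • A + y • B + z • C)
    (hx0 : x ≠ 0) (hy0 : y ≠ 0) (hz0 : z ≠ 0)
    (hx1 : x ≠ 1) (hy1 : y ≠ 1) (hz1 : z ≠ 1)
    (hst : x * y + y * z + z * x ≠ 0)
    (hP' : P' = (y * z / (x * y + y * z + z * x)) • A
        + (x * z / (x * y + y * z + z * x)) • B
        + (x * y / (x * y + y * z + z * x)) • C)
    (hQ : Q = homoth (cent A B C) (-(1 / 2)) P')
    (hQ' : Q' = homoth (cent A B C) (-(1 / 2)) P)
    (hD : Collinear ℝ {A, P, D} ∧ Collinear ℝ {B, C, D})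
    (hE : Collinear ℝ {B, P, E} ∧ Collinear ℝ {A, C, E})
    (hF : Collinear ℝ {C, P, F} ∧ Collinear ℝ {A, B, F})
    (hD₃ : Collinear ℝ {A, P', D₃} ∧ Collinear ℝ {B, C, D₃})
    (hE₃ : Collinear ℝ {B, P', E₃} ∧ Collinear ℝ {A, C, E₃})
    (hF₃ : Collinear ℝ {C, P', F₃} ∧ Collinear ℝ {A, B, F₃})
    (H : Pt)
    (hH : Par (H - A) (D - Q) ∧ Par (H - B) (E - Q) ∧ Par (H - C) (F - Q)) :
    (H = A ↔ (F - A = Q - E ∧ E - A = Q - F)) ∧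
    (H = A ↔ Collinear ℝ {F₃, midpoint ℝ C A, midpoint ℝ B E}) ∧
    (H = A ↔ Collinear ℝ {E₃, midpoint ℝ A B, midpoint ℝ C F}) ∧
    midpoint ℝ B E = homoth (cent A B C) (-(1 / 2)) E₃ ∧
    midpoint ℝ C F = homoth (cent A B C) (-(1 / 2)) F₃ := by
  have hΔ := area_ne_zero_of_affineIndependent hABC
  have hΔ' : area A C B ≠ 0 := by rwa [area_swap, neg_ne_zero]
  set s := x * y + y * z + z * x with hs
  have hy' : 1 - y ≠ 0 := sub_ne_zero.mpr hy1.symm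
  have hz' : 1 - z ≠ 0 := sub_ne_zero.mpr hz1.symm
  have hxs : x = 1 - y - z := by linarith
  have hPy : 1 - x * z / s = y * (1 - y) / s := by
    field_simp; rw [hs, hxs]; ring
  have hPz : 1 - x * y / s = z * (1 - z) / s := by
    field_simp; rw [hs, hxs]; ring
  rw [smul_add_eq_framePt A B C hsum] at hPco
  rw [smul_add_eq_framePt A B C (by field_simp; rw [hs]; ring)] at hP'
  rw [hP', homoth_cent_framePt, hPy, hPz] at hQ
  have hEe : E = framePt A B C 0 (z / (1 - y)) := by
    rw [← framePt_swap]
    refine trace_eq_s18 hΔ' hy' ?_ hE.2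
    rw [framePt_swap, ← hPco]; exact hE.1
  have hFe : F = framePt A B C (y / (1 - z)) 0 :=
    trace_eq_s18 hΔ hz' (hPco ▸ hF.1) hF.2
  have hE₃e : E₃ = framePt A B C 0 (x / (1 - y)) := by
    have h : x / (1 - y) = x * y / s / (1 - x * z / s) := by rw [hPy]; field_simp
    rw [h, ← framePt_swap]
    refine trace_eq_s18 hΔ' (by rw [hPy]; positivity) ?_ hE₃.2
    rw [framePt_swap, ← hP']; exact hE₃.1
  have hF₃e : F₃ = framePt A B C (x / (1 - z)) 0 := by
    have h : x / (1 - z) = x * z / s / (1 - x * y / s) := by rw [hPz]; field_simp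
    rw [h]
    exact trace_eq_s18 hΔ (by rw [hPz]; positivity) (hP' ▸ hF₃.1) hF₃.2
  have hA : A = framePt A B C 0 0 := by simp [framePt]
  have hB : B = framePt A B C 1 0 := by simp [framePt]
  have hC : C = framePt A B C 0 1 := by simp [framePt]
  have hBE : midpoint ℝ B E = framePt A B C (1 / 2) (z / (1 - y) / 2) := by
    rw [midpoint_eq_smul_add_smul, hEe]; ext <;> simp [framePt] <;> ring
  have hCF : midpoint ℝ C F = framePt A B C (y / (1 - z) / 2) (1 / 2) := by
    rw [midpoint_eq_smul_add_smul, hFe]; ext <;> simp [framePt] <;> ring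
  have hCA : midpoint ℝ C A = framePt A B C 0 (1 / 2) := by
    rw [midpoint_eq_smul_add_smul]; ext <;> simp [framePt] <;> ring
  have hAB : midpoint ℝ A B = framePt A B C (1 / 2) 0 := by
    rw [midpoint_eq_smul_add_smul]; ext <;> simp [framePt] <;> ring
  have hprod : (1 - y) * (1 - z) = s + x ^ 2 := by rw [hs, hxs]; ring
  -- Each of the four conditions is equivalent to `s = x ^ 2`.
  have key_y : s = x ^ 2 ↔ y * (1 - y) / s / 2 = y / (1 - z) := by
    rw [div_div, div_eq_div_iff (by positivity) hz']
    constructor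
    · intro h; linear_combination y * hprod - y * h
    · intro h; apply mul_left_cancel₀ hy0; linear_combination y * hprod - h
  have key_z : s = x ^ 2 ↔ z * (1 - z) / s / 2 = z / (1 - y) := by
    rw [div_div, div_eq_div_iff (by positivity) hy']
    constructor
    · intro h; linear_combination z * hprod - z * h
    · intro h; apply mul_left_cancel₀ hz0; linear_combination z * hprod - h
  have par_iff : s = x ^ 2 ↔ (F - A = Q - E ∧ E - A = Q - F) := by
    have hsum_iff : (F - A = Q - E ∧ E - A = Q - F) ↔
        framePt A B C (y / (1 - z)) (z / (1 - y)) = Q := by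
      have hEF : framePt A B C (y / (1 - z)) (z / (1 - y)) = E + F - A := by
        rw [hEe, hFe]; unfold framePt; module
      rw [hEF]
      constructor
      · rintro ⟨h, -⟩
        linear_combination h
      · rintro rfl
        constructor <;> abel
    rw [hsum_iff, hQ]
    constructor
    · intro h; rw [← key_y.mp h, ← key_z.mp h]
    · intro h; exact key_y.mpr (framePt_injective hΔ h).1.symm
  have H_iff : H = A ↔ s = x ^ 2 := by
    obtain ⟨-, hHB, hHC⟩ := hH
    have hHe := eq_framePt hΔ H
    generalize area A H C / area A B C = u at hHe
    generalize area A B H / area A B C = v at hHe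
    have hB' : Par (framePt A B C u v - framePt A B C 1 0) (E - Q) := by rwa [← hB, ← hHe]
    have hC' : Par (framePt A B C u v - framePt A B C 0 1) (F - Q) := by rwa [← hC, ← hHe]
    rw [hEe, hQ] at hB'
    rw [hFe, hQ] at hC'
    have eB := hB'.framePt_eq hΔ
    have eC := hC'.framePt_eq hΔ
    constructor
    · intro hHA
      obtain ⟨rfl, rfl⟩ := framePt_injective hΔ (hHe.symm.trans (hHA.trans hA))
      exact key_z.mpr (by linarith)
    · intro h
      rw [key_y.mp h, key_z.mp h] at eB eC
      have hv : v = 0 := by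
        have h0 : y / (1 - z) ≠ 0 := div_ne_zero hy0 hz'
        apply mul_right_cancel₀ h0; linarith
      have hu : u = 0 := by
        have h0 : z / (1 - y) ≠ 0 := div_ne_zero hz0 hy'
        apply mul_right_cancel₀ h0; linarith
      rw [hHe, hu, hv, ← hA]
  refine ⟨H_iff.trans par_iff, H_iff.trans ?_, H_iff.trans ?_, ?_, ?_⟩
  · rw [collinear_iff_area_eq_zero, hF₃e, hCA, hBE, area_framePt, mul_eq_zero, or_iff_left hΔ]
    have h : (0 - x / (1 - z)) * (z / (1 - y) / 2 - 0) -
        (1 / 2 - 0) * (1 / 2 - x / (1 - z)) = (x ^ 2 - s) / (4 * ((1 - y) * (1 - z))) := by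
      field_simp; rw [hs, hxs]; ring
    rw [h, div_eq_zero_iff, or_iff_left (by positivity), sub_eq_zero, eq_comm]
  · rw [collinear_iff_area_eq_zero, hE₃e, hAB, hCF, area_framePt, mul_eq_zero, or_iff_left hΔ]
    have h : (1 / 2 - 0) * (1 / 2 - x / (1 - y)) -
        (0 - x / (1 - y)) * (y / (1 - z) / 2 - 0) = (s - x ^ 2) / (4 * ((1 - y) * (1 - z))) := by
      field_simp; rw [hs, hxs]; ring
    rw [h, div_eq_zero_iff, or_iff_left (by positivity), sub_eq_zero]
  · rw [hBE, hE₃e, homoth_cent_framePt]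
    congr 1
    · ring
    · rw [hxs]; field_simp; ring
  · rw [hCF, hF₃e, homoth_cent_framePt]
    congr 1
    · rw [hxs]; field_simp; ring
    · ring
end
end
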